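/- Let p be a prime and let f₁,…,f_n be analytic functions from a neighborhood U of x₀ ∈ ℚ_p^m to ℚ_p such that 1, f₁,…,f_n are linearly independent over ℚ_p on any neighborhood of x₀. Then there exist a neighborhood V' ⊆ U of x₀ and constants C', α' > 0 such that for any c₁,…,c_n ∈ ℚ_p, the function x ↦ ‖Σ_{i=1}^n c_i ∇f_i(x)‖ (sup norm of the gradient vector) is (C', α')-good on V'. -/

import Mathlib

/-!
The coordinates of `∑ cᵢ ∇fᵢ` are linear combinations of analytic functions, and the sup norm of a
vector is attained at one coordinate.  It therefore suffices that all linear combinations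
`∑ cᵢ gᵢ` of the components of an analytic map `g` are good near `x₀` with common constants
(`exists_good_family`, `isGood_pi`).

Combinations vanishing near `x₀` may be split off, and by scaling and compactness of the unit sphere
in a complement it is enough to treat coefficients `c` near a fixed `c₀` for which `∑ c₀ᵢ gᵢ` is not
zero near `x₀` (`exists_local_good`).  Then some homogeneous part of its Taylor expansion, of degree
`k` say, is nonzero, and there is a basis of directions `v` at which it does not vanish.  By
continuity, for all `c` near `c₀` and all `y` near `x₀`, the power series of
`u ↦ ∑ cᵢ gᵢ (y + u s v)` on the unit disc, `s` small, has a `k`-th coefficient dominating all later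
ones.

Such a series behaves like a polynomial of degree `k`: repeated synthetic division
(`divClass_of_series`) shows that it is much smaller than its value at the centre only on at most `k`
small discs (`one_dim_bound`).  In a ball of `ℚ_p^m` one starts at a
point where the absolute value of the combination is maximal and moves in the basis directions one
after the other; Fubini's theorem (`chain_bound`) yields the estimate on the ball
(`isGood_of_lines`).
-/

open MeasureTheory

/-- `g` is `(C, α)`-good on `V`: for every open ball `B ⊆ V` and every `ε > 0`,
`μ {x ∈ B : g(x) < ε · sup_B g} ≤ C ε^α μ B`. -/
def IsGood {X : Type*} [PseudoMetricSpace X] [MeasurableSpace X]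
    (μ : MeasureTheory.Measure X) (C α : ℝ) (g : X → ℝ) (V : Set X) : Prop :=
  ∀ (z : X) (r : ℝ), 0 < r → Metric.ball z r ⊆ V → ∀ ε : ℝ, 0 < ε →
    μ {x ∈ Metric.ball z r | g x < ε * ⨆ y ∈ Metric.ball z r, g y} ≤
      ENNReal.ofReal (C * ε ^ α) * μ (Metric.ball z r)

open MeasureTheory

/-- The partial derivative `∂_j g (x)` of a scalar function on `K^m`. -/
noncomputable def pd {K : Type*} [NontriviallyNormedField K] {m : ℕ}
    (g : (Fin m → K) → K) (j : Fin m) (x : Fin m → K) : K :=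
  fderiv K g x (Pi.single j 1)

/-! ### Power series in one variable and synthetic division -/

/-- The functions on the closed unit disc of `ℚ_p` whose `k`-th divided differences have constant
norm.  Class `0` consists of the functions of constant norm; `f` has class `k + 1` if for every `u`
in the disc `f w = f u + (w - u) * g w` with a quotient `g` of class `k`.  The quotient may depend
on `u`.  Power series dominated by their `k`-th coefficient are the motivating example
(`divClass_of_series`). -/
def DivClass (p : ℕ) [Fact p.Prime] : ℕ → (ℚ_[p] → ℚ_[p]) → Prop
  | 0, f => ∀ u v, ‖u‖ ≤ 1 → ‖v‖ ≤ 1 → ‖f u‖ = ‖f v‖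
  | k + 1, f => ∀ u, ‖u‖ ≤ 1 → ∃ g, DivClass p k g ∧ ∀ w, ‖w‖ ≤ 1 → f w = f u + (w - u) * g w

section PowerSeries
variable {p : ℕ} [Fact p.Prime]

lemma summable_mul_pow {a : ℕ → ℚ_[p]} (ha : Filter.Tendsto a Filter.atTop (nhds 0))
    {u : ℚ_[p]} (hu : ‖u‖ ≤ 1) : Summable fun i => a i * u ^ i := by
  refine NonarchimedeanAddGroup.summable_of_tendsto_cofinite_zero ?_
  rw [Nat.cofinite_eq_atTop]
  refine squeeze_zero_norm (fun i => ?_) (tendsto_zero_iff_norm_tendsto_zero.1 ha)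
  rw [norm_mul, norm_pow]
  exact mul_le_of_le_one_right (norm_nonneg _) (pow_le_one₀ (norm_nonneg _) hu)

lemma norm_tsum_mul_pow_le {a : ℕ → ℚ_[p]} {u : ℚ_[p]} (hu : ‖u‖ ≤ 1) {C : ℝ}
    (hC : ∀ i, ‖a i‖ ≤ C) : ‖∑' i, a i * u ^ i‖ ≤ C := by
  refine IsUltrametricDist.norm_tsum_le_of_forall_le (fun i => ?_)
  rw [norm_mul, norm_pow]
  exact (mul_le_of_le_one_right (norm_nonneg _) (pow_le_one₀ (norm_nonneg _) hu)).trans (hC i)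

/-- If the constant term dominates all other coefficients, the series has constant norm on the unit
disc. -/
lemma norm_tsum_eq_head {a : ℕ → ℚ_[p]} (ha : Filter.Tendsto a Filter.atTop (nhds 0))
    {u : ℚ_[p]} (hu : ‖u‖ ≤ 1) (h : ∀ j, ‖a (j + 1)‖ ≤ 2⁻¹ * ‖a 0‖) :
    ‖∑' i, a i * u ^ i‖ = ‖a 0‖ := by
  have e : ∑' i, a i * u ^ i = a 0 + u * ∑' i, a (i + 1) * u ^ i := by
    rw [(summable_mul_pow ha hu).tsum_eq_zero_add, ← tsum_mul_left]
    simp only [pow_zero, mul_one, pow_succ]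
    congr 1
    exact tsum_congr fun i => by ring
  have b : ‖u * ∑' i, a (i + 1) * u ^ i‖ ≤ 2⁻¹ * ‖a 0‖ := by
    rw [norm_mul]
    exact (mul_le_of_le_one_left (norm_nonneg _) hu).trans
      (norm_tsum_mul_pow_le (a := fun i => a (i + 1)) hu h)
  rw [e]
  rcases eq_or_ne (a 0) 0 with h0 | h0
  · rw [h0, norm_zero, mul_zero] at b
    rw [h0, norm_le_zero_iff.1 b]; simp
  · have : 0 < ‖a 0‖ := norm_pos_iff.2 h0
    rw [IsUltrametricDist.norm_add_eq_max_of_norm_ne_norm (by intro hh; linarith),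
      max_eq_left (by linarith)]

/-- A null sequence of coefficients, those beyond the `k`-th having at most half the norm of the
`k`-th one, defines a function of class `k`.  Dividing `f - f u` by `w - u` gives the series with
coefficients `b j = ∑' i, a (i + j + 1) * u ^ i`; by the ultrametric inequality `b (k - 1)` has the
norm of `a k` and again dominates the later coefficients. -/
lemma divClass_of_series (k : ℕ) : ∀ (a : ℕ → ℚ_[p]),
    Filter.Tendsto a Filter.atTop (nhds 0) → (∀ j, k < j → ‖a j‖ ≤ 2⁻¹ * ‖a k‖) →
    ∀ f : ℚ_[p] → ℚ_[p], (∀ u, ‖u‖ ≤ 1 → f u = ∑' i, a i * u ^ i) → DivClass p k f := by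
  induction k with
  | zero =>
    intro a ha h f hf u v hu hv
    rw [hf u hu, hf v hv, norm_tsum_eq_head ha hu fun j => h _ j.succ_pos,
      norm_tsum_eq_head ha hv fun j => h _ j.succ_pos]
  | succ k ih =>
    intro a ha h f hf u hu
    have hs : ∀ j, Filter.Tendsto (fun i => a (i + j)) Filter.atTop (nhds 0) := fun j =>
      ha.comp (Filter.tendsto_add_atTop_nat j)
    set b : ℕ → ℚ_[p] := fun j => ∑' i, a (i + (j + 1)) * u ^ i with hb
    have hrec : ∀ j, b j = a (j + 1) + u * b (j + 1) := fun j => by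
      simp only [hb]
      rw [(summable_mul_pow (hs (j + 1)) hu).tsum_eq_zero_add, ← tsum_mul_left]
      simp only [pow_zero, mul_one, zero_add]
      congr 1
      refine tsum_congr fun i => ?_
      rw [show i + 1 + (j + 1) = i + (j + 1 + 1) by ring]; ring
    have hb0 : Filter.Tendsto b Filter.atTop (nhds 0) := by
      rw [Metric.tendsto_atTop] at ha ⊢
      intro ε hε
      obtain ⟨N, hN⟩ := ha (ε / 2) (half_pos hε)
      refine ⟨N, fun j hj => ?_⟩
      rw [dist_zero_right]
      refine (norm_tsum_mul_pow_le (a := fun i => a (i + (j + 1))) hu (C := ε / 2)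
        fun i => ?_).trans_lt (half_lt_self hε)
      have := hN (i + (j + 1)) (by omega)
      rw [dist_zero_right] at this
      exact this.le
    have hbk : ‖b k‖ = ‖a (k + 1)‖ := by
      have := norm_tsum_eq_head (hs (k + 1)) hu fun j => by
        simpa using h (j + 1 + (k + 1)) (by omega)
      simpa [hb] using this
    refine ⟨fun w => ∑' i, b i * w ^ i, ih b hb0 (fun j hj => ?_) _ fun _ _ => rfl, fun w hw => ?_⟩
    · rw [hbk]
      exact norm_tsum_mul_pow_le (a := fun i => a (i + (j + 1))) hu fun i => h _ (by omega)
    · have hB := summable_mul_pow hb0 hw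
      have hA := summable_mul_pow ha hw
      have hu0 : f u = a 0 + u * b 0 := by
        rw [hf u hu, (summable_mul_pow ha hu).tsum_eq_zero_add, ← tsum_mul_left]
        simp only [pow_zero, mul_one, zero_add]
        congr 1
        exact tsum_congr fun i => by ring
      have hw0 : f w = a 0 + w * ∑' i, a (i + 1) * w ^ i := by
        rw [hf w hw, hA.tsum_eq_zero_add, ← tsum_mul_left]
        simp only [pow_zero, mul_one]
        congr 1
        exact tsum_congr fun i => by ring
      have hA1 : Summable fun i => a (i + 1) * w ^ i := summable_mul_pow (hs 1) hw
      have hB1 : Summable fun i => b (i + 1) * w ^ i :=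
        summable_mul_pow (hb0.comp (Filter.tendsto_add_atTop_nat 1)) hw
      have e1 : ∑' i, b i * w ^ i = ∑' i, a (i + 1) * w ^ i + u * ∑' i, b (i + 1) * w ^ i := by
        rw [← tsum_mul_left, ← hA1.tsum_add (hB1.mul_left u)]
        exact tsum_congr fun i => by rw [hrec i]; ring
      have e2 : ∑' i, b i * w ^ i = b 0 + w * ∑' i, b (i + 1) * w ^ i := by
        rw [hB.tsum_eq_zero_add, ← tsum_mul_left]
        simp only [pow_zero, mul_one]
        congr 1
        exact tsum_congr fun i => by ring
      rw [hw0, hu0, sub_mul]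
      linear_combination w * (-1) * e1 + u * e2

end PowerSeries

/-! ### Small values of functions of one variable -/

section OneDim
variable {p : ℕ} [Fact p.Prime] [MeasurableSpace ℚ_[p]] [BorelSpace ℚ_[p]]

omit [BorelSpace ℚ_[p]] in
/-- A function of class `k` is either uniformly small on the unit disc, or small only on a union of
at most `k` discs of radius `σ`.  Indeed, if `‖f u‖ < τ`, then outside the disc of radius `σ` around
`u` the set where `‖f‖ < τ` is contained in the set where the quotient is below `τ / σ`, and the
induction hypothesis applies to the quotient. -/
lemma divClass_dichotomy (ν : Measure ℚ_[p]) {σ : ℝ} (hσ : 0 < σ) (hσ1 : σ ≤ 1) {β : ENNReal}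
    (hβ : ∀ u, ν (Metric.closedBall u σ) ≤ β) (k : ℕ) : ∀ f, DivClass p k f → ∀ τ : ℝ,
    (∀ u, ‖u‖ ≤ 1 → ‖f u‖ < τ / σ ^ k) ∨ ν {u | ‖u‖ ≤ 1 ∧ ‖f u‖ < τ} ≤ k * β := by
  induction k with
  | zero =>
    intro f hf τ
    rcases Set.eq_empty_or_nonempty {u | ‖u‖ ≤ 1 ∧ ‖f u‖ < τ} with h | ⟨u, hu, hu'⟩
    · right; simp [h]
    · left; intro v hv; rw [hf v u hv hu]; simpa using hu'
  | succ k ih =>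
    intro f hf τ
    rcases Set.eq_empty_or_nonempty {u | ‖u‖ ≤ 1 ∧ ‖f u‖ < τ} with h | ⟨u, hu, hu'⟩
    · right; simp [h]
    obtain ⟨g, hg, hfg⟩ := hf u hu
    have hτ : 0 < τ := (norm_nonneg _).trans_lt hu'
    rcases ih g hg (τ / σ) with h | h
    · left
      intro w hw
      rw [hfg w hw]
      refine (Padic.nonarchimedean _ _).trans_lt (max_lt ?_ ?_)
      · exact hu'.trans_le (le_div_self hτ.le (by positivity) (pow_le_one₀ hσ.le hσ1))
      · rw [norm_mul]
        have h1 : ‖w - u‖ ≤ 1 := by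
          rw [sub_eq_add_neg]
          exact (Padic.nonarchimedean _ _).trans (max_le hw (by rwa [norm_neg]))
        refine (mul_le_of_le_one_left (norm_nonneg _) h1).trans_lt ((h w hw).trans_eq ?_)
        rw [pow_succ', div_div]
    · right
      have hsub : {u | ‖u‖ ≤ 1 ∧ ‖f u‖ < τ} ⊆
          {u | ‖u‖ ≤ 1 ∧ ‖g u‖ < τ / σ} ∪ Metric.closedBall u σ := by
        rintro w ⟨hw, hw'⟩
        by_cases hd : dist w u ≤ σ
        · exact Or.inr hd
        · left
          refine ⟨hw, ?_⟩
          rw [dist_eq_norm] at hd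
          push Not at hd
          have e : (w - u) * g w = f w + -f u := by rw [hfg w hw]; ring
          have : ‖w - u‖ * ‖g w‖ < τ := by
            rw [← norm_mul, e]
            exact (Padic.nonarchimedean _ _).trans_lt (max_lt hw' (by rwa [norm_neg]))
          rw [lt_div_iff₀ hσ]
          nlinarith [norm_nonneg (g w)]
      calc _ ≤ _ := measure_mono hsub
        _ ≤ _ := measure_union_le _ _
        _ ≤ k * β + β := add_le_add h (hβ u)
        _ = _ := by push_cast; ring

/-- The unit disc contains the `p ^ l` disjoint translates of the disc of radius `p ^ (-l)` by
`0, 1, …, p ^ l - 1`. -/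
lemma measure_small_ball (ν : Measure ℚ_[p]) [ν.IsAddLeftInvariant] (l : ℕ) (u : ℚ_[p]) :
    ν (Metric.closedBall u ((p : ℝ)⁻¹ ^ l)) ≤
      ENNReal.ofReal ((p : ℝ)⁻¹ ^ l) * ν (Metric.closedBall 0 1) := by
  have hp : 0 < (p : ℝ) := by exact_mod_cast (Fact.out : p.Prime).pos
  set σ : ℝ := (p : ℝ)⁻¹ ^ l with hσ
  have hσ0 : 0 < σ := by positivity
  have hσ1 : σ ≤ 1 := pow_le_one₀ (by positivity)
    (inv_le_one_of_one_le₀ (by exact_mod_cast (Fact.out : p.Prime).one_lt.le))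
  have htr : ∀ v : ℚ_[p], ν (Metric.closedBall v σ) = ν (Metric.closedBall 0 σ) := fun v => by
    have := measure_preimage_add ν (-v) (Metric.closedBall (0 : ℚ_[p]) σ)
    rw [← this]
    congr 1
    ext w
    simp [dist_eq_norm, sub_eq_neg_add]
  have key : (p ^ l : ℕ) * ν (Metric.closedBall (0 : ℚ_[p]) σ) ≤ ν (Metric.closedBall 0 1) := by
    have hd : Set.PairwiseDisjoint (↑(Finset.range (p ^ l)))
        fun i : ℕ => Metric.closedBall (i : ℚ_[p]) σ := by
      intro i hi j hj hij
      simp only [Finset.coe_range, Set.mem_Iio] at hi hj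
      refine (IsUltrametricDist.closedBall_eq_or_disjoint (i : ℚ_[p]) (j : ℚ_[p]) σ).resolve_left ?_
      intro he
      have : (i : ℚ_[p]) ∈ Metric.closedBall (j : ℚ_[p]) σ := he ▸ Metric.mem_closedBall_self hσ0.le
      rw [Metric.mem_closedBall, dist_eq_norm] at this
      have h2 : ‖(((i : ℤ) - (j : ℤ) : ℤ) : ℚ_[p])‖ ≤ (p : ℝ) ^ (-l : ℤ) := by
        push_cast
        rwa [zpow_neg, zpow_natCast, ← inv_pow]
      rw [Padic.norm_int_le_pow_iff_dvd] at h2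
      have h3 : (i : ℤ) ≡ j [ZMOD (p ^ l : ℕ)] := by
        have := (Int.modEq_iff_dvd.2 h2).symm
        exact_mod_cast this
      rw [Int.natCast_modEq_iff] at h3
      exact hij (h3.eq_of_lt_of_lt hi hj)
    calc (p ^ l : ℕ) * ν (Metric.closedBall (0 : ℚ_[p]) σ)
        = ∑ i ∈ Finset.range (p ^ l), ν (Metric.closedBall (i : ℚ_[p]) σ) := by
          simp [htr]
      _ = ν (⋃ i ∈ Finset.range (p ^ l), Metric.closedBall (i : ℚ_[p]) σ) :=
          (measure_biUnion_finset hd fun i _ => Metric.isClosed_closedBall.measurableSet).symm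
      _ ≤ _ := by
          refine measure_mono (Set.iUnion₂_subset fun i _ w hw => ?_)
          rw [Metric.mem_closedBall, dist_eq_norm] at hw ⊢
          have : w - 0 = (w - i) + i := by ring
          rw [this]
          exact (Padic.nonarchimedean _ _).trans (max_le (hw.trans hσ1)
            (by simpa using Padic.norm_int_le_one (p := p) i))
  rw [htr]
  have hc : ENNReal.ofReal σ * (p ^ l : ℕ) = 1 := by
    rw [← ENNReal.ofReal_natCast, ← ENNReal.ofReal_mul hσ0.le, hσ]
    push_cast
    rw [← mul_pow, inv_mul_cancel₀ hp.ne', one_pow, ENNReal.ofReal_one]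
  calc _ = ENNReal.ofReal σ * ((p ^ l : ℕ) * ν (Metric.closedBall (0 : ℚ_[p]) σ)) := by
        rw [← mul_assoc, hc, one_mul]
    _ ≤ _ := by gcongr

/-- The Remez-type estimate in one variable: relative to its value at the centre, a function of
class `k` is smaller than `σ ^ k`, `σ = p ^ (-l)`, only on a set of relative measure `≤ k σ`.  The
first alternative in `divClass_dichotomy` is excluded by the value at `0`. -/
lemma one_dim_bound (ν : Measure ℚ_[p]) [ν.IsAddLeftInvariant] (k : ℕ) {f : ℚ_[p] → ℚ_[p]}
    (hf : DivClass p k f) (l : ℕ) :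
    ν {u | ‖u‖ ≤ 1 ∧ ‖f u‖ < ((p : ℝ)⁻¹ ^ l) ^ k * ‖f 0‖} ≤
      k * (ENNReal.ofReal ((p : ℝ)⁻¹ ^ l) * ν (Metric.closedBall 0 1)) := by
  have hp : 0 < (p : ℝ) := by exact_mod_cast (Fact.out : p.Prime).pos
  have hσ0 : 0 < (p : ℝ)⁻¹ ^ l := by positivity
  have hσ1 : (p : ℝ)⁻¹ ^ l ≤ 1 := pow_le_one₀ (by positivity)
    (inv_le_one_of_one_le₀ (by exact_mod_cast (Fact.out : p.Prime).one_lt.le))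
  refine (divClass_dichotomy ν hσ0 hσ1 (measure_small_ball ν l) k f hf _).resolve_left fun h => ?_
  have := h 0 (by simp)
  rw [mul_div_cancel_left₀ _ (by positivity)] at this
  exact lt_irrefl _ this

end OneDim

/-! ### Iterating the estimate over the coordinates -/

section Chain
variable {p : ℕ} [Fact p.Prime] [MeasurableSpace ℚ_[p]] [BorelSpace ℚ_[p]]
variable {E : Type*} [NormedAddCommGroup E] [NormedSpace ℚ_[p] E]

/-- Moving from `z` one direction at a time, each step loses at most a factor `η` outside a set of
parameters of measure `≤ β`; hence `k` steps lose at most `η ^ k` outside a set of measure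
`≤ k * β`.  The induction integrates over the first coordinate: for a good first step the
induction hypothesis bounds the slice, and the bad first steps have total measure `≤ β`. -/
lemma chain_bound (ν : Measure ℚ_[p]) [SigmaFinite ν] (hν : ν (Metric.closedBall 0 1) = 1)
    {φ : E → ℝ} {Ω : Set E} (hΩ : IsOpen Ω) (hφ : ContinuousOn φ Ω) {η : ℝ} (hη : 0 ≤ η)
    {β : ENNReal} (k : ℕ) :
    ∀ v : Fin k → E, (∀ i, ∀ y ∈ Ω, ∀ u : ℚ_[p], ‖u‖ ≤ 1 → y + u • v i ∈ Ω) →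
    (∀ i, ∀ y ∈ Ω, ν {u | ‖u‖ ≤ 1 ∧ φ (y + u • v i) < η * φ y} ≤ β) → ∀ z ∈ Ω,
    Measure.pi (fun _ : Fin k => ν)
      {t | (∀ i, ‖t i‖ ≤ 1) ∧ φ (z + ∑ i, t i • v i) < η ^ k * φ z} ≤ k * β := by
  induction k with
  | zero => intro v _ _ z _; simp
  | succ k ih =>
    intro v hv hb z hz
    have hmem : ∀ t : Fin (k + 1) → ℚ_[p], (∀ i, ‖t i‖ ≤ 1) → z + ∑ i, t i • v i ∈ Ω := by
      intro t ht
      have : ∀ s : Finset (Fin (k + 1)), z + ∑ i ∈ s, t i • v i ∈ Ω := by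
        intro s
        induction s using Finset.cons_induction with
        | empty => simpa using hz
        | cons a s ha ihs =>
          rw [Finset.sum_cons, add_comm (t a • v a), ← add_assoc]
          exact hv a _ ihs _ (ht a)
      exact this _
    set S : Set (Fin (k + 1) → ℚ_[p]) :=
      {t | (∀ i, ‖t i‖ ≤ 1) ∧ φ (z + ∑ i, t i • v i) < η ^ (k + 1) * φ z} with hS
    have hSm : MeasurableSet S := by
      have hc : Continuous fun t : Fin (k + 1) → ℚ_[p] => z + ∑ i, t i • v i := by fun_prop
      have h1 : IsOpen ((fun t : Fin (k + 1) → ℚ_[p] => z + ∑ i, t i • v i) ⁻¹'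
          (Ω ∩ φ ⁻¹' Set.Iio (η ^ (k + 1) * φ z))) :=
        (hφ.isOpen_inter_preimage hΩ isOpen_Iio).preimage hc
      have h2 : IsClosed {t : Fin (k + 1) → ℚ_[p] | ∀ i, ‖t i‖ ≤ 1} := by
        rw [Set.ofPred_forall]
        exact isClosed_iInter fun i => isClosed_le (by fun_prop) continuous_const
      have : S = {t : Fin (k + 1) → ℚ_[p] | ∀ i, ‖t i‖ ≤ 1} ∩
          ((fun t : Fin (k + 1) → ℚ_[p] => z + ∑ i, t i • v i) ⁻¹'
          (Ω ∩ φ ⁻¹' Set.Iio (η ^ (k + 1) * φ z))) := by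
        ext t
        constructor
        · rintro ⟨h, h'⟩; exact ⟨h, hmem t h, h'⟩
        · rintro ⟨h, _, h'⟩; exact ⟨h, h'⟩
      rw [this]
      exact h2.measurableSet.inter h1.measurableSet
    have hmp := (measurePreserving_piFinSuccAbove (fun _ : Fin (k + 1) => ν) 0).symm
    rw [← hmp.measure_preimage hSm.nullMeasurableSet,
      Measure.prod_apply (hmp.measurable hSm)]
    have hslice : ∀ u : ℚ_[p], (Prod.mk u ⁻¹'
        ((MeasurableEquiv.piFinSuccAbove (fun _ : Fin (k + 1) => ℚ_[p]) 0).symm ⁻¹' S)) =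
        {t : Fin k → ℚ_[p] | ‖u‖ ≤ 1 ∧ (∀ i, ‖t i‖ ≤ 1) ∧
          φ ((z + u • v 0) + ∑ i, t i • v i.succ) < η ^ (k + 1) * φ z} := by
      intro u
      ext t
      simp only [hS, Set.mem_preimage, Set.mem_ofPred_eq, MeasurableEquiv.piFinSuccAbove_symm_apply,
        Fin.insertNthEquiv_zero, Fin.consEquiv_apply, Fin.forall_fin_succ, Fin.sum_univ_succ,
        Fin.cons_zero, Fin.cons_succ, and_assoc, add_assoc]
    simp only [hslice]
    set bad : Set ℚ_[p] := {u | ‖u‖ ≤ 1 ∧ φ (z + u • v 0) < η * φ z} with hbad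
    have hle : ∀ u : ℚ_[p], Measure.pi (fun _ : Fin k => ν)
        {t : Fin k → ℚ_[p] | ‖u‖ ≤ 1 ∧ (∀ i, ‖t i‖ ≤ 1) ∧
          φ ((z + u • v 0) + ∑ i, t i • v i.succ) < η ^ (k + 1) * φ z} ≤
        (Metric.closedBall (0 : ℚ_[p]) 1).indicator (fun _ => (k : ENNReal) * β) u +
          bad.indicator (fun _ => 1) u := by
      intro u
      by_cases hu : ‖u‖ ≤ 1
      · by_cases hub : u ∈ bad
        · rw [Set.indicator_of_mem hub]
          refine le_add_left ?_
          calc _ ≤ Measure.pi (fun _ : Fin k => ν)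
                (Set.univ.pi fun _ => Metric.closedBall (0 : ℚ_[p]) 1) := by
                refine measure_mono ?_
                rintro t ⟨_, h, _⟩ i _
                simpa using h i
            _ = 1 := by rw [Measure.pi_pi]; simp [hν]
        · rw [Set.indicator_of_mem (by simpa using hu)]
          refine le_add_right ?_
          refine (measure_mono ?_).trans (ih (fun i => v i.succ) (fun i => hv i.succ)
            (fun i => hb i.succ) (z + u • v 0) (hv 0 z hz u hu))
          rintro t ⟨_, h, h'⟩
          refine ⟨h, h'.trans_le ?_⟩
          have : η * φ z ≤ φ (z + u • v 0) := by
            by_contra hcon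
            exact hub ⟨hu, not_le.1 hcon⟩
          rw [pow_succ, mul_assoc]
          gcongr
      · simp [hu]
    calc _ ≤ ∫⁻ u, ((Metric.closedBall (0 : ℚ_[p]) 1).indicator (fun _ => (k : ENNReal) * β) u +
          bad.indicator (fun _ => 1) u) ∂ν := lintegral_mono hle
      _ = ∫⁻ u, (Metric.closedBall (0 : ℚ_[p]) 1).indicator (fun _ => (k : ENNReal) * β) u ∂ν +
          ∫⁻ u, bad.indicator (fun _ => 1) u ∂ν :=
          lintegral_add_left (measurable_const.indicator Metric.isClosed_closedBall.measurableSet) _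
      _ ≤ k * β + β := by
          gcongr
          · exact (lintegral_indicator_const_le _ _).trans (by simp [hν])
          · exact (lintegral_indicator_const_le _ _).trans (by simpa using hb 0 z hz)
      _ = _ := by push_cast; ring

end Chain

/-! ### Goodness from estimates along lines -/

section Balls
variable {p : ℕ} [Fact p.Prime]

/-- A linear automorphism multiplies Haar measure by a constant. -/
lemma measure_image_equiv {m : ℕ} [MeasurableSpace (Fin m → ℚ_[p])] [BorelSpace (Fin m → ℚ_[p])]
    (μ : Measure (Fin m → ℚ_[p])) [μ.IsAddHaarMeasure]
    (L : (Fin m → ℚ_[p]) ≃L[ℚ_[p]] (Fin m → ℚ_[p])) :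
    ∃ c : NNReal, ∀ A, μ (L '' A) = c * μ A := by
  have h := Measure.isAddLeftInvariant_eq_smul (μ.map L.symm) μ
  refine ⟨Measure.addHaarScalarFactor (μ.map L.symm) μ, fun A => ?_⟩
  have h2 : μ.map L.symm A = μ (L '' A) := by
    rw [show μ.map L.symm A = μ.map L.symm.toHomeomorph.toMeasurableEquiv A from rfl,
      MeasurableEquiv.map_apply]
    congr 1
    exact (L.image_eq_preimage_symm A).symm
  rw [← h2]
  exact congrArg (fun η : Measure (Fin m → ℚ_[p]) => η A) h

/-- The value group of `ℚ_p` is discrete, so an open ball is a closed ball whose radius is the norm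
of a scalar. -/
lemma ball_eq_closedBall {m : ℕ} {r : ℝ} (hr : 0 < r) :
    ∃ s : ℚ_[p], s ≠ 0 ∧ ‖s‖ < r ∧
      ∀ z : Fin m → ℚ_[p], Metric.ball z r = Metric.closedBall z ‖s‖ := by
  have hp : (1 : ℝ) < p := by exact_mod_cast (Fact.out : p.Prime).one_lt
  obtain ⟨n, hn1, hn2⟩ := exists_mem_Ioc_zpow hr hp
  have hs : ‖(p : ℚ_[p]) ^ (-n)‖ = (p : ℝ) ^ n := by
    rw [Padic.norm_p_zpow, neg_neg]
  have hp0 : (p : ℚ_[p]) ≠ 0 := by exact_mod_cast (Fact.out : p.Prime).ne_zero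
  refine ⟨(p : ℚ_[p]) ^ (-n), zpow_ne_zero _ hp0, hs ▸ hn1, fun z => ?_⟩
  rw [hs]
  refine subset_antisymm (fun x hx => ?_) (Metric.closedBall_subset_ball hn1)
  rw [Metric.mem_ball, dist_eq_norm] at hx
  rw [Metric.mem_closedBall, dist_eq_norm, pi_norm_le_iff_of_nonneg (by positivity)]
  intro i
  rw [Padic.norm_le_pow_iff_norm_lt_pow_add_one]
  exact ((norm_le_pi_norm (x - z) i).trans_lt hx).trans_le hn2

/-- If `φ` restricts to the norm of a function of class `k` on all short lines in the directions
`T e_i`, then `φ` is good, with constants depending only on `μ`, `k` and `T`.  In a ball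
`z + s ℤ_p^m` one starts at a point `y` where `φ` is maximal and applies `chain_bound` with the
one-variable estimate in every direction.  The parallelepiped swept out is `y + s T(ℤ_p^m)`; it
contains the ball because `T⁻¹` does not increase norms, at the cost of a constant factor in
measure. -/
lemma isGood_of_lines {m : ℕ} [MeasurableSpace (Fin m → ℚ_[p])] [BorelSpace (Fin m → ℚ_[p])]
    (μ : Measure (Fin m → ℚ_[p])) [μ.IsAddHaarMeasure] (k : ℕ)
    (T : (Fin m → ℚ_[p]) ≃L[ℚ_[p]] (Fin m → ℚ_[p])) (hT : ∀ x, ‖T.symm x‖ ≤ ‖x‖) :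
    ∃ C α : ℝ, 0 < C ∧ 0 < α ∧ ∀ (φ : (Fin m → ℚ_[p]) → ℝ) (x₀ : Fin m → ℚ_[p]) (ρ Λ : ℝ),
      (∀ x, 0 ≤ φ x) → 0 < ρ → 1 ≤ Λ → (∀ i, ‖T (Pi.single i 1)‖ ≤ Λ) →
      ContinuousOn φ (Metric.ball x₀ (Λ * ρ)) →
      (∀ s : ℚ_[p], ‖s‖ < ρ → ∀ y ∈ Metric.ball x₀ (Λ * ρ), ∀ i, ∃ f, DivClass p k f ∧
        ∀ u, ‖u‖ ≤ 1 → ‖f u‖ = φ (y + u • s • T (Pi.single i 1))) →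
      IsGood μ C α φ (Metric.ball x₀ ρ) := by
  have hp : (1 : ℝ) < p := by exact_mod_cast (Fact.out : p.Prime).one_lt
  obtain ⟨cT, hcT⟩ := measure_image_equiv μ T
  -- `ε` is compared with powers of `p ^ (-N)`: the `m` steps lose a factor `(p ^ (-l)) ^ (k * m)`,
  -- and the extra one in `N` absorbs the rounding of `ε` and covers `k * m = 0`
  set N : ℕ := k * m + 1 with hN
  set C : ℝ := 1 + cT * m * k * p with hC
  have hC1 : 1 ≤ C := le_add_of_nonneg_right (by positivity)
  refine ⟨C, (N : ℝ)⁻¹, by positivity, by positivity, ?_⟩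
  intro φ x₀ ρ Λ hφ0 hρ hΛ hTΛ hφ hline z r hr hB ε hε
  rcases le_or_gt 1 ε with hε1 | hε1
  · -- for `ε ≥ 1` the constant already exceeds one
    refine (measure_mono (Set.sep_subset _ _)).trans ?_
    have : 1 ≤ C * ε ^ (N : ℝ)⁻¹ :=
      one_le_mul_of_one_le_of_one_le hC1 (Real.one_le_rpow hε1 (by positivity))
    calc _ = 1 * μ (Metric.ball z r) := (one_mul _).symm
      _ ≤ _ := by gcongr; exact ENNReal.one_le_ofReal.2 this
  have hzρ : z ∈ Metric.ball x₀ ρ := hB (Metric.mem_ball_self hr)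
  have hzball : Metric.ball z ρ = Metric.ball x₀ ρ :=
    (IsUltrametricDist.ball_eq_of_mem hzρ).symm
  have hr' : Metric.ball z r = Metric.ball z (min r ρ) := by
    rcases le_total r ρ with h | h
    · rw [min_eq_left h]
    · rw [min_eq_right h]
      exact subset_antisymm (hzball ▸ hB) (Metric.ball_subset_ball h)
  obtain ⟨s, hs0, hs, hsb⟩ := ball_eq_closedBall (p := p) (m := m) (lt_min hr hρ)
  rw [hr', hsb z] at hB ⊢
  have hsρ : ‖s‖ < ρ := hs.trans_le (min_le_right _ _)
  have hρΛ : ρ ≤ Λ * ρ := le_mul_of_one_le_left hρ.le hΛ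
  have hBΩ : Metric.closedBall z ‖s‖ ⊆ Metric.ball x₀ (Λ * ρ) :=
    hB.trans (Metric.ball_subset_ball hρΛ)
  obtain ⟨y, hy, hymax⟩ := (isCompact_closedBall z ‖s‖).exists_isMaxOn
    ⟨z, Metric.mem_closedBall_self (norm_nonneg _)⟩ (hφ.mono hBΩ)
  have hsup : ⨆ x ∈ Metric.closedBall z ‖s‖, φ x ≤ φ y :=
    Real.iSup_le (fun x => Real.iSup_le (fun hx => hymax hx) (hφ0 y)) (hφ0 y)
  set q : ℝ := (p : ℝ)⁻¹ with hq
  have hq0 : 0 < q := by positivity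
  have hq1 : q < 1 := inv_lt_one_of_one_lt₀ hp
  obtain ⟨l, hl1, hl2⟩ := exists_nat_pow_near_of_lt_one hε hε1.le
    (pow_pos hq0 N) (pow_lt_one₀ hq0.le hq1 (by omega))
  have hlε : ε ≤ ((q ^ l) ^ k) ^ m := by
    refine hl2.trans ?_
    rw [← pow_mul, ← pow_mul, ← pow_mul]
    exact pow_le_pow_of_le_one hq0.le hq1.le (by rw [hN]; nlinarith)
  have hqε : q ^ l ≤ p * ε ^ (N : ℝ)⁻¹ := by
    have h1 : q ^ (l + 1) ≤ ε ^ (N : ℝ)⁻¹ := by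
      have : (q ^ (l + 1)) = (((q ^ N) ^ (l + 1)) : ℝ) ^ (N : ℝ)⁻¹ := by
        rw [← pow_mul, mul_comm, pow_mul, Real.pow_rpow_inv_natCast (by positivity) (by omega)]
      rw [this]
      exact Real.rpow_le_rpow (by positivity) hl1.le (by positivity)
    calc q ^ l = p * q ^ (l + 1) := by rw [pow_succ, hq]; field_simp
      _ ≤ _ := by gcongr
  -- Haar measure on `ℚ_p`, normalized on the unit disc, is used for the one-variable slices
  borelize ℚ_[p]
  have hms : ‹MeasurableSpace (Fin m → ℚ_[p])› = MeasurableSpace.pi := by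
    rw [BorelSpace.measurable_eq (α := Fin m → ℚ_[p]),
      (Pi.borelSpace (X := fun _ : Fin m => ℚ_[p])).measurable_eq]
  subst hms
  let K₀ : TopologicalSpace.PositiveCompacts ℚ_[p] :=
    ⟨⟨Metric.closedBall 0 1, isCompact_closedBall 0 1⟩,
      ⟨0, Metric.ball_subset_interior_closedBall (Metric.mem_ball_self one_pos)⟩⟩
  set ν : Measure ℚ_[p] := Measure.addHaarMeasure K₀ with hνdef
  have hν : ν (Metric.closedBall 0 1) = 1 := Measure.addHaarMeasure_self (K₀ := K₀)
  have hstep : ∀ i : Fin m, ∀ w ∈ Metric.ball x₀ (Λ * ρ),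
      ν {u | ‖u‖ ≤ 1 ∧ φ (w + u • s • T (Pi.single i 1)) < (q ^ l) ^ k * φ w} ≤
        k * ENNReal.ofReal (q ^ l) := by
    intro i w hw
    obtain ⟨f, hf, hfu⟩ := hline s hsρ w hw i
    have h := one_dim_bound ν k hf l
    rw [hν, mul_one] at h
    refine (measure_mono ?_).trans h
    rintro u ⟨hu, hu'⟩
    refine ⟨hu, ?_⟩
    rw [hfu u hu, hfu 0 (by simp), zero_smul, add_zero]
    exact hu'
  have hmove : ∀ i : Fin m, ∀ w ∈ Metric.ball x₀ (Λ * ρ), ∀ u : ℚ_[p], ‖u‖ ≤ 1 →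
      w + u • s • T (Pi.single i 1) ∈ Metric.ball x₀ (Λ * ρ) := by
    intro i w hw u hu
    rw [IsUltrametricDist.ball_eq_of_mem hw, Metric.mem_ball, dist_eq_norm,
      add_sub_cancel_left, norm_smul, norm_smul]
    calc _ ≤ 1 * (‖s‖ * Λ) := by gcongr; exact hTΛ i
      _ < Λ * ρ := by rw [one_mul, mul_comm]; gcongr
  have hchain := chain_bound ν hν Metric.isOpen_ball hφ (η := (q ^ l) ^ k) (by positivity) m
    (fun i => s • T (Pi.single i 1)) hmove hstep y (hBΩ hy)
  set S : Set (Fin m → ℚ_[p]) := {t | (∀ i, ‖t i‖ ≤ 1) ∧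
    φ (y + ∑ i, t i • s • T (Pi.single i 1)) < ((q ^ l) ^ k) ^ m * φ y} with hS
  have hsum : ∀ t : Fin m → ℚ_[p], ∑ i, t i • s • T (Pi.single i 1) = s • T t := by
    intro t
    conv_rhs => rw [← Finset.univ_sum_single t]
    rw [map_sum, Finset.smul_sum]
    refine Finset.sum_congr rfl fun i _ => ?_
    rw [smul_comm, ← map_smul, ← Pi.single_smul, smul_eq_mul, mul_one]
  have hsub : {x ∈ Metric.closedBall z ‖s‖ | φ x < ε * ⨆ x ∈ Metric.closedBall z ‖s‖, φ x} ⊆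
      (fun w => y + w) '' ((fun w => s • w) '' (T '' S)) := by
    rintro x ⟨hx, hx'⟩
    have hxy : ‖x - y‖ ≤ ‖s‖ := by
      rw [← dist_eq_norm]
      exact (IsUltrametricDist.dist_triangle_max x z y).trans
        (max_le hx (by rw [dist_comm]; exact hy))
    have hxe : y + s • T (T.symm (s⁻¹ • (x - y))) = x := by
      rw [T.apply_symm_apply, smul_inv_smul₀ hs0]; abel
    refine ⟨_, ⟨_, ⟨T.symm (s⁻¹ • (x - y)), ⟨fun i => ?_, ?_⟩, rfl⟩, rfl⟩, hxe⟩
    · refine (norm_le_pi_norm _ i).trans ((hT _).trans ?_)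
      rw [norm_smul, norm_inv]
      exact inv_mul_le_one_of_le₀ hxy (norm_nonneg _)
    · rw [hsum, hxe]
      exact hx'.trans_le (mul_le_mul hlε hsup
        (Real.iSup_nonneg fun x => Real.iSup_nonneg fun _ => hφ0 x) (by positivity))
  obtain ⟨cs, hcs⟩ := measure_image_equiv μ
    (ContinuousLinearEquiv.smulLeft (Units.mk0 s hs0) : (Fin m → ℚ_[p]) ≃L[ℚ_[p]] _)
  replace hcs : ∀ A, μ ((fun w => s • w) '' A) = cs * μ A := hcs
  have hunit : μ (Metric.closedBall z ‖s‖) = cs * μ (Metric.closedBall 0 1) := by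
    rw [← hcs, Set.image_smul, smul_closedBall' hs0, smul_zero, mul_one]
    have := measure_preimage_add μ (-z) (Metric.closedBall (0 : Fin m → ℚ_[p]) ‖s‖)
    rw [← this]
    congr 1
    ext w
    simp [dist_eq_norm, sub_eq_neg_add]
  have hμS : μ S ≤ m * (k * ENNReal.ofReal (q ^ l)) * μ (Metric.closedBall 0 1) := by
    rw [Measure.isAddLeftInvariant_eq_smul μ (Measure.pi fun _ : Fin m => ν)]
    set κ := Measure.addHaarScalarFactor μ (Measure.pi fun _ : Fin m => ν)
    have h1 : Measure.pi (fun _ : Fin m => ν) (Metric.closedBall 0 1) = 1 := by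
      rw [closedBall_pi _ zero_le_one, Measure.pi_pi]
      simp [hν]
    rw [Measure.smul_apply, Measure.smul_apply, h1, ENNReal.smul_def, ENNReal.smul_def, smul_eq_mul,
      smul_eq_mul, mul_one, mul_comm (_ * _)]
    gcongr
  calc _ ≤ μ ((fun w => y + w) '' ((fun w => s • w) '' (T '' S))) := measure_mono hsub
    _ = cs * (cT * μ S) := by
        rw [Set.image_add_left, measure_preimage_add, hcs, hcT]
    _ ≤ cs * (cT * (m * (k * ENNReal.ofReal (q ^ l)) * μ (Metric.closedBall 0 1))) := by gcongr
    _ = (cT * m * k * ENNReal.ofReal (q ^ l)) * μ (Metric.closedBall z ‖s‖) := by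
        rw [hunit]; ring
    _ ≤ _ := by
        gcongr
        have : (cT * m * k * ENNReal.ofReal (q ^ l) : ENNReal) =
            ENNReal.ofReal (cT * m * k * q ^ l) := by
          rw [ENNReal.ofReal_mul (by positivity), ENNReal.ofReal_mul (by positivity),
            ENNReal.ofReal_mul (by positivity)]
          simp
        rw [this]
        refine ENNReal.ofReal_le_ofReal ?_
        calc (cT * m * k * q ^ l : ℝ) ≤ cT * m * k * (p * ε ^ (N : ℝ)⁻¹) := by gcongr
          _ = (cT * m * k * p) * ε ^ (N : ℝ)⁻¹ := by ring
          _ ≤ C * ε ^ (N : ℝ)⁻¹ := by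
            gcongr
            rw [hC]; linarith

end Balls

/-! ### Directions in which a homogeneous function does not vanish -/

section Directions
variable {K : Type*} [NontriviallyNormedField K] [CompleteSpace K]

/-- A continuous function, homogeneous of degree `k` and nonzero at `v₀`, is nonzero at all vectors
of a suitable basis `T e_i`: take `T e_i = s (v₀ + η e_i)` with `η` small, so that `P` does not vanish
there, and different from `0` and `-∑ v₀ i`, so that `T` is invertible.  The factor `s` is chosen
large enough for `T⁻¹` not to increase norms. -/
lemma exists_directions {m k : ℕ} {P : (Fin m → K) → K} (hP : Continuous P)
    (hhom : ∀ (t : K) v, P (t • v) = t ^ k * P v) {v₀ : Fin m → K} (hv₀ : P v₀ ≠ 0) :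
    ∃ T : (Fin m → K) ≃L[K] (Fin m → K), (∀ x, ‖T.symm x‖ ≤ ‖x‖) ∧
      ∀ i, P (T (Pi.single i 1)) ≠ 0 := by
  set σ : K := ∑ i, v₀ i with hσ
  have h1 : ∀ᶠ η in nhdsWithin (0 : K) {0}ᶜ, ∀ i : Fin m, P (η • Pi.single i 1 + v₀) ≠ 0 := by
    refine (Filter.eventually_all.2 fun i => ?_).filter_mono nhdsWithin_le_nhds
    have hc : ContinuousAt (fun η : K => P (η • Pi.single i 1 + v₀)) 0 := by fun_prop
    exact hc.eventually_ne (by simpa using hv₀)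
  have h2 : ∀ᶠ η in nhdsWithin (0 : K) {0}ᶜ, η ≠ -σ := by
    by_cases h : σ = 0
    · rw [h, neg_zero]; exact eventually_mem_nhdsWithin
    · exact eventually_ne_nhdsWithin (fun h0 => h (by simpa using h0.symm))
  obtain ⟨η, hη, hησ, hη0⟩ := (h1.and (h2.and eventually_mem_nhdsWithin)).exists
  replace hη0 : η ≠ 0 := hη0
  let T₁ : (Fin m → K) →ₗ[K] (Fin m → K) :=
    η • LinearMap.id + (∑ i, LinearMap.proj (R := K) (φ := fun _ : Fin m => K) i).smulRight v₀
  have hT₁ : ∀ x, T₁ x = η • x + (∑ i, x i) • v₀ := fun x => by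
    simp [T₁, LinearMap.sum_apply]
  have hinj : Function.Injective T₁ := by
    rw [← LinearMap.ker_eq_bot, LinearMap.ker_eq_bot']
    intro x hx
    rw [hT₁] at hx
    have hs : (η + σ) * ∑ i, x i = 0 := by
      have := congrArg (fun w : Fin m → K => ∑ i, w i) hx
      simp only [Pi.add_apply, Pi.smul_apply, smul_eq_mul, Finset.sum_add_distrib,
        ← Finset.mul_sum, Pi.zero_apply, Finset.sum_const_zero] at this
      rw [← this, hσ]; ring
    have hs0 : ∑ i, x i = 0 := (mul_eq_zero.1 hs).resolve_left fun h =>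
      hησ (eq_neg_of_add_eq_zero_left h)
    rw [hs0, zero_smul, add_zero] at hx
    exact (smul_eq_zero.1 hx).resolve_left hη0
  let T₀ : (Fin m → K) ≃L[K] (Fin m → K) :=
    (LinearEquiv.ofInjectiveEndo T₁ hinj).toContinuousLinearEquiv
  have hT₀ : ∀ x, T₀ x = η • x + (∑ i, x i) • v₀ := hT₁
  obtain ⟨s, hs⟩ := NormedField.exists_lt_norm K ‖(T₀.symm : (Fin m → K) →L[K] (Fin m → K))‖
  have hs0 : s ≠ 0 := norm_pos_iff.1 ((norm_nonneg _).trans_lt hs)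
  refine ⟨T₀.trans (ContinuousLinearEquiv.smulLeft (Units.mk0 s hs0)), fun x => ?_, fun i => ?_⟩
  · have e : (T₀.trans (ContinuousLinearEquiv.smulLeft (Units.mk0 s hs0))).symm x =
        T₀.symm (s⁻¹ • x) := rfl
    rw [e]
    refine ((T₀.symm : (Fin m → K) →L[K] (Fin m → K)).le_opNorm _).trans ?_
    rw [norm_smul, norm_inv, ← mul_assoc]
    refine mul_le_of_le_one_left (norm_nonneg _) ?_
    rw [← div_eq_mul_inv]
    exact div_le_one_of_le₀ hs.le (norm_nonneg _)
  · have e : (T₀.trans (ContinuousLinearEquiv.smulLeft (Units.mk0 s hs0))) (Pi.single i 1) =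
        s • (η • Pi.single i 1 + v₀) := by
      change s • T₀ (Pi.single i 1) = _
      rw [hT₀]; simp
    rw [e, hhom]
    exact mul_ne_zero (pow_ne_zero _ hs0) (hη i)

end Directions

/-! ### Taylor expansions at nearby points -/

section Expansion
variable {K E F : Type*} [NontriviallyNormedField K] [NormedAddCommGroup E] [NormedSpace K E]
  [NormedAddCommGroup F] [NormedSpace K F] [CompleteSpace F]

lemma tsum_fiber_le {β : ℕ → Type*} {f : (Σ k, β k) → NNReal} (hf : Summable f) (j : ℕ) :
    Summable (fun s => f ⟨j, s⟩) ∧ ∑' s, f ⟨j, s⟩ ≤ ∑' s, f s :=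
  ⟨NNReal.summable_comp_injective hf sigma_mk_injective,
    NNReal.tsum_comp_le_tsum_of_inj hf sigma_mk_injective⟩

omit [CompleteSpace F] in
/-- Cauchy-type bounds for the re-expansions of a power series, uniform in the new centre. -/
lemma exists_bound_changeOrigin (Q : FormalMultilinearSeries K E F) {R : NNReal}
    (hRQ : (R : ENNReal) + R < Q.radius) :
    ∃ M : NNReal, ∀ y : E, ‖y‖₊ ≤ R → ∀ j, ‖Q.changeOrigin y j‖₊ * R ^ j ≤ M := by
  have hsum := Q.changeOriginSeries_summable_aux₁ hRQ
  refine ⟨∑' s : (Σ k l : ℕ, { s : Finset (Fin (k + l)) // s.card = l }),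
    ‖Q (s.1 + s.2.1)‖₊ * R ^ s.2.1 * R ^ s.1, fun y hy j => ?_⟩
  obtain ⟨hs2, hs3⟩ := tsum_fiber_le hsum j
  have hle : ∀ s : (Σ l : ℕ, { s : Finset (Fin (j + l)) // s.card = l }),
      ‖Q (j + s.1)‖₊ * ‖y‖₊ ^ s.1 * R ^ j ≤ ‖Q (j + s.1)‖₊ * R ^ s.1 * R ^ j :=
    fun s => by gcongr
  have hyR : (‖y‖₊ : ENNReal) < Q.radius :=
    lt_of_le_of_lt ((ENNReal.coe_le_coe.2 hy).trans le_self_add) hRQ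
  calc _ ≤ (∑' s : (Σ l : ℕ, { s : Finset (Fin (j + l)) // s.card = l }),
        ‖Q (j + s.1)‖₊ * ‖y‖₊ ^ s.1) * R ^ j :=
        mul_le_mul_left (Q.nnnorm_changeOrigin_le j hyR) _
    _ = ∑' s : (Σ l : ℕ, { s : Finset (Fin (j + l)) // s.card = l }),
        ‖Q (j + s.1)‖₊ * ‖y‖₊ ^ s.1 * R ^ j := tsum_mul_right.symm
    _ ≤ ∑' s : (Σ l : ℕ, { s : Finset (Fin (j + l)) // s.card = l }),
        ‖Q (j + s.1)‖₊ * R ^ s.1 * R ^ j :=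
        (NNReal.summable_of_le hle hs2).tsum_le_tsum hle hs2
    _ ≤ _ := hs3

/-- Near `x₀` an analytic function has expansions `W y` at the points `x₀ + y`, with geometric
bounds on the coefficients and a common radius of convergence independent of `y`, and with
coefficients continuous in `y` at `0`. -/
lemma exists_uniform_expansion {g : E → F} {x₀ : E} (hg : AnalyticAt K g x₀) :
    ∃ (W : E → FormalMultilinearSeries K E F) (R M L : ℝ), 0 < R ∧ 0 < M ∧ 0 < L ∧
      (∀ y, ‖y‖ < R → ∀ j, ‖W y j‖ ≤ M * L ^ j) ∧
      (∀ y, ‖y‖ < R → ∀ v, ‖v‖ < R → HasSum (fun j => W y j fun _ => v) (g (x₀ + y + v))) ∧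
      (∀ j, ContinuousAt (fun y => W y j) 0) ∧ ContinuousOn g (Metric.ball x₀ R) := by
  obtain ⟨Q, r, hQ⟩ := hg
  obtain ⟨R, hR0, hRr⟩ : ∃ R : NNReal, 0 < R ∧ (R : ENNReal) + R < r := by
    obtain ⟨t, ht0, htr⟩ := ENNReal.lt_iff_exists_nnreal_btwn.1 hQ.r_pos
    refine ⟨t / 2, by simpa using ht0, ?_⟩
    rw [← ENNReal.coe_add, add_halves]
    exact htr
  obtain ⟨M, hM⟩ := exists_bound_changeOrigin Q (hRr.trans_le hQ.r_le)
  have hlt : ∀ y : E, ‖y‖ < R → (‖y‖₊ : ENNReal) < R := fun y hy => by exact_mod_cast hy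
  have hRle : (R : ENNReal) ≤ R + R := le_self_add
  refine ⟨Q.changeOrigin, R, M + 1, (R : ℝ)⁻¹, by exact_mod_cast hR0, by positivity,
    by positivity, fun y hy j => ?_, fun y hy v hv => ?_, fun j => ?_, ?_⟩
  · have h3 : ‖Q.changeOrigin y j‖ * (R : ℝ) ^ j ≤ M := by exact_mod_cast hM y hy.le j
    rw [inv_pow, ← div_eq_mul_inv, le_div_iff₀ (by positivity)]
    linarith
  · have h := (hQ.changeOrigin (y := y) (((hlt y hy).trans_le hRle).trans hRr)).hasSum (y := v) ?_
    · exact h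
    · rw [Metric.mem_eball, edist_zero_right, lt_tsub_iff_left]
      refine lt_of_le_of_lt ?_ hRr
      exact add_le_add (hlt y hy).le (hlt v hv).le
  · exact (Q.analyticAt_changeOrigin hQ.radius_pos j).continuousAt
  · refine hQ.continuousOn.mono fun x hx => ?_
    rw [Metric.mem_eball, edist_eq_enorm_sub]
    rw [Metric.mem_ball, dist_eq_norm] at hx
    exact ((hlt _ hx).trans_le hRle).trans hRr

end Expansion

/-! ### Goodness near a nonzero combination -/

section Local
variable {p : ℕ} [Fact p.Prime]

lemma norm_sum_mul_le {n : ℕ} (c w : Fin n → ℚ_[p]) : ‖∑ i, c i * w i‖ ≤ ‖c‖ * ‖w‖ := by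
  refine IsUltrametricDist.norm_sum_le_of_forall_le_of_nonneg (by positivity) fun i _ => ?_
  rw [norm_mul]
  gcongr
  · exact norm_le_pi_norm c i
  · exact norm_le_pi_norm w i

/-- After the substitution `v = s u` with `‖s‖ < ρ`, coefficients bounded by `M L ^ j` become
dominated by the `k`-th one as soon as `‖a k‖ > δ` and `ρ` is small in terms of `M`, `L`, `k`, `δ`.
The smallness does not involve `s`, so arbitrarily small discs are covered. -/
lemma divClass_of_bounds {k : ℕ} {a : ℕ → ℚ_[p]} {s : ℚ_[p]} {M L ρ δ : ℝ} (hM : 0 ≤ M)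
    (hL : 0 ≤ L) (hs : ‖s‖ < ρ) (ha : ∀ j, ‖a j‖ ≤ M * L ^ j) (hLρ : L * ρ ≤ 2⁻¹)
    (hδ : δ < ‖a k‖) (hMδ : M * L ^ (k + 1) * ρ ≤ 2⁻¹ * δ) {f : ℚ_[p] → ℚ_[p]}
    (hf : ∀ u, ‖u‖ ≤ 1 → HasSum (fun j => (u * s) ^ j * a j) (f u)) : DivClass p k f := by
  have hρ : 0 ≤ ρ := (norm_nonneg s).trans hs.le
  have hLs : L * ‖s‖ ≤ 2⁻¹ := le_trans (by gcongr) hLρ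
  refine divClass_of_series k (fun j => a j * s ^ j) ?_ (fun j hj => ?_) f fun u hu => ?_
  · refine squeeze_zero_norm (a := fun j => M * (2⁻¹ : ℝ) ^ j) (fun j => ?_) ?_
    · rw [norm_mul, norm_pow]
      calc _ ≤ M * L ^ j * ‖s‖ ^ j := by gcongr; exact ha j
        _ = M * (L * ‖s‖) ^ j := by ring
        _ ≤ _ := by gcongr
    · simpa using (tendsto_pow_atTop_nhds_zero_of_lt_one (by norm_num : (0 : ℝ) ≤ 2⁻¹)
        (by norm_num)).const_mul M
  · obtain ⟨d, rfl⟩ := Nat.exists_eq_add_of_lt hj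
    rw [norm_mul, norm_mul, norm_pow, norm_pow]
    calc _ ≤ M * L ^ (k + d + 1) * ‖s‖ ^ (k + d + 1) := by gcongr; exact ha _
      _ = ‖s‖ ^ k * (M * L ^ (k + 1) * ‖s‖) * (L * ‖s‖) ^ d := by ring
      _ ≤ ‖s‖ ^ k * (M * L ^ (k + 1) * ρ) * 1 := by
        gcongr
        exact pow_le_one₀ (by positivity) (hLs.trans (by norm_num))
      _ ≤ ‖s‖ ^ k * (2⁻¹ * ‖a k‖) * 1 := by gcongr ‖s‖ ^ k * ?_ * 1; linarith
      _ = _ := by ring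
  · rw [← (hf u hu).tsum_eq]
    refine tsum_congr fun j => ?_
    rw [mul_pow, mul_assoc, mul_comm, mul_comm (s ^ j)]

/-- If the germ of `∑ c₀ i * g i` at `x₀` is nonzero, then all combinations with `c` close to `c₀`
are good with common constants on a common ball.  Some homogeneous part of the expansion at `x₀`,
say of degree `k`, is nonzero; it stays bounded away from zero at the directions of
`exists_directions` when `c` and the centre of expansion vary a little, so all restrictions to short
lines in these directions are of class `k`. -/
lemma exists_local_good {m n : ℕ} [MeasurableSpace (Fin m → ℚ_[p])] [BorelSpace (Fin m → ℚ_[p])]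
    (μ : Measure (Fin m → ℚ_[p])) [μ.IsAddHaarMeasure] {g : (Fin m → ℚ_[p]) → Fin n → ℚ_[p]}
    {x₀ : Fin m → ℚ_[p]} (hg : AnalyticAt ℚ_[p] g x₀) {c₀ : Fin n → ℚ_[p]}
    (hc₀ : ¬ ∀ᶠ x in nhds x₀, ∑ i, c₀ i * g x i = 0) :
    ∃ C α ρ : ℝ, 0 < C ∧ 0 < α ∧ 0 < ρ ∧ ∀ᶠ c in nhds c₀,
      IsGood μ C α (fun x => ‖∑ i, c i * g x i‖) (Metric.ball x₀ ρ) := by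
  obtain ⟨W, R, M, L, hR, hM, hL, hWb, hWs, hWc, hgc⟩ := exists_uniform_expansion hg
  have hsumc : ∀ (c : Fin n → ℚ_[p]) {w : ℕ → Fin n → ℚ_[p]} {b}, HasSum w b →
      HasSum (fun j => ∑ i, c i * w j i) (∑ i, c i * b i) := fun c w b h =>
    hasSum_sum fun i _ => ((Pi.hasSum.1 h) i).mul_left (c i)
  -- some coefficient of the expansion at `x₀` does not vanish
  obtain ⟨v₀, k, hk⟩ : ∃ v₀ k, ∑ i, c₀ i * W 0 k (fun _ => v₀) i ≠ 0 := by
    by_contra! hcon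
    refine hc₀ (Filter.eventually_of_mem (Metric.ball_mem_nhds x₀ hR) fun x hx => ?_)
    rw [Metric.mem_ball, dist_eq_norm] at hx
    have h := hsumc c₀ (hWs 0 (by simpa using hR) (x - x₀) hx)
    simp only [hcon, add_zero, add_sub_cancel] at h
    exact h.unique hasSum_zero
  obtain ⟨T, hT, hTP⟩ := exists_directions (m := m) (k := k)
    (P := fun v => ∑ i, c₀ i * W 0 k (fun _ => v) i)
    (by
      have : Continuous fun v : Fin m → ℚ_[p] => W 0 k fun _ => v :=
        (W 0 k).cont.comp (by fun_prop)
      fun_prop)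
    (fun t v => by
      have : W 0 k (fun _ => t • v) = t ^ k • W 0 k fun _ => v := by
        simpa using (W 0 k).map_smul_univ (fun _ => t) fun _ => v
      simp only [this, Pi.smul_apply, smul_eq_mul, Finset.mul_sum]
      exact Finset.sum_congr rfl fun i _ => mul_left_comm _ _ _) hk
  obtain ⟨C, α, hC, hα, hgood⟩ := isGood_of_lines μ k T hT
  set Λ : ℝ := 1 + ‖(T : (Fin m → ℚ_[p]) →L[ℚ_[p]] (Fin m → ℚ_[p]))‖ with hΛdef
  have hΛ : 1 ≤ Λ := le_add_of_nonneg_right (norm_nonneg _)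
  have hTΛ : ∀ i, ‖T (Pi.single i 1)‖ ≤ Λ := fun i => by
    have h := (T : (Fin m → ℚ_[p]) →L[ℚ_[p]] (Fin m → ℚ_[p])).le_opNorm (Pi.single i 1)
    rw [Pi.norm_single, norm_one, mul_one] at h
    exact h.trans (le_add_of_nonneg_left zero_le_one)
  -- a uniform lower bound for the `k`-th coefficients
  obtain ⟨δ, hδ, hδ0⟩ : ∃ δ : ℝ, (∀ i, δ < ‖∑ l, c₀ l * W 0 k (fun _ => T (Pi.single i 1)) l‖) ∧
      0 < δ := by
    have h : ∀ᶠ δ in nhdsWithin (0 : ℝ) (Set.Ioi 0),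
        ∀ i, δ < ‖∑ l, c₀ l * W 0 k (fun _ => T (Pi.single i 1)) l‖ :=
      (Filter.eventually_all.2 fun i => Iio_mem_nhds (norm_pos_iff.2 (hTP i))).filter_mono
        nhdsWithin_le_nhds
    exact (h.and eventually_mem_nhdsWithin).exists
  have hnear : ∀ᶠ cy in nhds (c₀, (0 : Fin m → ℚ_[p])), ∀ i,
      δ < ‖∑ l, cy.1 l * W cy.2 k (fun _ => T (Pi.single i 1)) l‖ := by
    refine Filter.eventually_all.2 fun i => ?_
    have h1 : ContinuousAt (fun cy : (Fin n → ℚ_[p]) × (Fin m → ℚ_[p]) =>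
        W cy.2 k fun _ => T (Pi.single i 1)) (c₀, 0) := by
      have h2 : ContinuousAt (fun cy : (Fin n → ℚ_[p]) × (Fin m → ℚ_[p]) => W cy.2 k) (c₀, 0) :=
        ContinuousAt.comp (f := Prod.snd) (g := fun y => W y k) (hWc k) continuousAt_snd
      exact (ContinuousMultilinearMap.apply ℚ_[p] (fun _ : Fin k => Fin m → ℚ_[p])
        (Fin n → ℚ_[p]) fun _ => T (Pi.single i 1)).continuous.continuousAt.comp h2
    have h3 : ContinuousAt (fun cy : (Fin n → ℚ_[p]) × (Fin m → ℚ_[p]) =>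
        ‖∑ l, cy.1 l * W cy.2 k (fun _ => T (Pi.single i 1)) l‖) (c₀, 0) := by
      refine ContinuousAt.norm ?_
      refine tendsto_finsetSum _ fun l _ => ?_
      refine ContinuousAt.mul (f := fun cy : (Fin n → ℚ_[p]) × (Fin m → ℚ_[p]) => cy.1 l)
        (by fun_prop) ?_
      exact ((continuous_apply l).continuousAt).comp h1
    exact h3.eventually (Ioi_mem_nhds (hδ i))
  rw [nhds_prod_eq] at hnear
  obtain ⟨P₁, hP₁, P₂, hP₂, hP⟩ := Filter.eventually_prod_iff.1 hnear
  obtain ⟨R', hR', hRP⟩ := Metric.eventually_nhds_iff.1 hP₂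
  set B : ℝ := ‖c₀‖ + 1 with hB
  have hB0 : 0 ≤ B := by positivity
  have hΛ0 : 0 < Λ := one_pos.trans_le hΛ
  obtain ⟨ρ, ⟨h1, h2, h3, h4⟩, hρ⟩ : ∃ ρ : ℝ, (Λ * ρ < R ∧ Λ * ρ < R' ∧ L * Λ * ρ < 2⁻¹ ∧
      B * M * (L * Λ) ^ (k + 1) * ρ < 2⁻¹ * δ) ∧ 0 < ρ := by
    have key : ∀ a b : ℝ, 0 < b → ∀ᶠ ρ in nhdsWithin (0 : ℝ) (Set.Ioi 0), a * ρ < b := by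
      intro a b hb
      have hc : ContinuousAt (fun ρ : ℝ => a * ρ) 0 := by fun_prop
      exact (hc.eventually (Iio_mem_nhds (by simpa using hb))).filter_mono nhdsWithin_le_nhds
    exact (((key _ _ hR).and ((key _ _ hR').and ((key _ _ (by norm_num)).and
      (key _ _ (by positivity))))).and eventually_mem_nhdsWithin).exists
  refine ⟨C, α, ρ, hC, hα, hρ, ?_⟩
  filter_upwards [hP₁, Metric.ball_mem_nhds c₀ one_pos] with c hcP hcB
  have hcB' : ‖c‖ ≤ B := by
    rw [Metric.mem_ball, dist_eq_norm] at hcB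
    have := norm_le_norm_add_norm_sub' c c₀
    linarith
  refine hgood _ x₀ ρ Λ (fun _ => norm_nonneg _) hρ hΛ hTΛ ?_ ?_
  · have : ContinuousOn g (Metric.ball x₀ (Λ * ρ)) := hgc.mono (Metric.ball_subset_ball h1.le)
    refine ContinuousOn.norm (continuousOn_finsetSum _ fun l _ => ?_)
    exact continuousOn_const.mul ((continuous_apply l).comp_continuousOn this)
  · intro s hs y hy i
    rw [Metric.mem_ball, dist_eq_norm] at hy
    refine ⟨fun u => ∑ l, c l * g (y + u • s • T (Pi.single i 1)) l, ?_, fun u _ => rfl⟩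
    refine divClass_of_bounds (a := fun j => ∑ l, c l * W (y - x₀) j (fun _ => T (Pi.single i 1)) l)
      (M := B * M) (L := L * Λ) (ρ := ρ) (δ := δ) (by positivity) (by positivity) hs (fun j => ?_)
      h3.le (hP hcP (hRP (by simpa using hy.trans h2)) i) h4.le fun u hu => ?_
    · refine (norm_sum_mul_le _ _).trans ?_
      have h5 := (W (y - x₀) j).le_opNorm fun _ => T (Pi.single i 1)
      rw [Finset.prod_const, Finset.card_univ, Fintype.card_fin] at h5
      calc _ ≤ B * (M * L ^ j * Λ ^ j) := by
            refine mul_le_mul hcB' (h5.trans ?_) (norm_nonneg _) hB0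
            gcongr
            · exact hWb _ (hy.trans h1) j
            · exact hTΛ i
        _ = _ := by rw [mul_pow]; ring
    · have hus : ‖u • s • T (Pi.single i 1)‖ < R := by
        rw [norm_smul, norm_smul]
        calc _ ≤ 1 * (ρ * Λ) := by gcongr; exact hTΛ i
          _ = Λ * ρ := by ring
          _ < R := h1
      have h6 := hsumc c (hWs (y - x₀) (hy.trans h1) _ hus)
      rw [add_sub_cancel] at h6
      convert h6 using 2 with j
      rw [Finset.mul_sum]
      refine Finset.sum_congr rfl fun l _ => ?_
      have h7 : W (y - x₀) j (fun _ => u • s • T (Pi.single i 1)) =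
          (u * s) ^ j • W (y - x₀) j fun _ => T (Pi.single i 1) := by
        simpa [mul_smul] using
          (W (y - x₀) j).map_smul_univ (fun _ => u * s) fun _ => T (Pi.single i 1)
      rw [h7, Pi.smul_apply, smul_eq_mul, mul_left_comm]

end Local

/-! ### Operations on good functions -/

section Good
variable {X : Type*} [PseudoMetricSpace X] [MeasurableSpace X] {μ : Measure X} {C α : ℝ}
  {g : X → ℝ} {V : Set X}

/-- Passing to a larger constant and a smaller exponent needs `1 ≤ C'`, which makes the bound trivial
for `ε ≥ 1`. -/
lemma IsGood.mono (h : IsGood μ C α g V) {C' α' : ℝ} {V' : Set X} (hC : C ≤ C') (hC' : 1 ≤ C')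
    (hα' : 0 ≤ α') (hα : α' ≤ α) (hV : V' ⊆ V) : IsGood μ C' α' g V' := by
  intro z r hr hB ε hε
  rcases le_or_gt 1 ε with h1 | h1
  · refine (measure_mono (Set.sep_subset _ _)).trans ?_
    calc _ = 1 * μ (Metric.ball z r) := (one_mul _).symm
      _ ≤ _ := by
        gcongr
        exact ENNReal.one_le_ofReal.2
          (one_le_mul_of_one_le_of_one_le hC' (Real.one_le_rpow h1 hα'))
  · refine (h z r hr (hB.trans hV) ε hε).trans ?_
    gcongr ENNReal.ofReal ?_ * _
    exact mul_le_mul hC (Real.rpow_le_rpow_of_exponent_ge hε h1.le hα) (by positivity)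
      (by linarith)

lemma IsGood.congr (h : IsGood μ C α g V) {g' : X → ℝ} (hg : Set.EqOn g g' V) :
    IsGood μ C α g' V := by
  intro z r hr hB ε hε
  have e : ⨆ y ∈ Metric.ball z r, g' y = ⨆ y ∈ Metric.ball z r, g y :=
    iSup_congr fun y => iSup_congr fun hy => (hg (hB hy)).symm
  rw [e]
  refine (measure_mono ?_).trans (h z r hr hB ε hε)
  rintro x ⟨hx, hx'⟩
  exact ⟨hx, by rwa [hg (hB hx)]⟩

lemma IsGood.const_mul (h : IsGood μ C α g V) {a : ℝ} (ha : 0 < a) :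
    IsGood μ C α (fun x => a * g x) V := by
  intro z r hr hB ε hε
  refine (measure_mono ?_).trans (h z r hr hB ε hε)
  rintro x ⟨hx, hx'⟩
  refine ⟨hx, ?_⟩
  simp only [← Real.mul_iSup_of_nonneg ha.le] at hx'
  rw [mul_left_comm] at hx'
  exact lt_of_mul_lt_mul_left hx' ha.le

lemma isGood_zero : IsGood μ C α (fun _ => 0) V := by
  intro z r hr hB ε hε
  simp

end Good

lemma exists_norm_apply_eq {ι E : Type*} [Fintype ι] [Nonempty ι] [SeminormedAddCommGroup E]
    (x : ι → E) : ∃ i, ‖x i‖ = ‖x‖ := by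
  obtain ⟨i, hi⟩ := Finite.exists_max fun i => ‖x i‖
  exact ⟨i, le_antisymm (norm_le_pi_norm x i)
    ((pi_norm_le_iff_of_nonneg (norm_nonneg _)).2 hi)⟩

/-! ### Uniformity in the coefficients -/

section Compactness
variable {p : ℕ} [Fact p.Prime]

/-- All linear combinations of the components of an analytic map are good near `x₀` with common
constants.  The combinations that vanish identically near `x₀` form a subspace `Z`; the goodness
of a function depends only on the coefficients modulo `Z` and is invariant under scaling, so it
suffices to treat the unit sphere of a complement of `Z`.  This is compact and
`exists_local_good` applies at each of its points. -/
lemma exists_good_family {m n : ℕ} [MeasurableSpace (Fin m → ℚ_[p])]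
    [BorelSpace (Fin m → ℚ_[p])]
    (μ : Measure (Fin m → ℚ_[p])) [μ.IsAddHaarMeasure] {g : (Fin m → ℚ_[p]) → Fin n → ℚ_[p]}
    {x₀ : Fin m → ℚ_[p]} (hg : AnalyticAt ℚ_[p] g x₀) :
    ∃ C α ρ : ℝ, 1 ≤ C ∧ 0 < α ∧ 0 < ρ ∧
      ∀ c : Fin n → ℚ_[p], IsGood μ C α (fun x => ‖∑ i, c i * g x i‖) (Metric.ball x₀ ρ) := by
  let Z : Submodule ℚ_[p] (Fin n → ℚ_[p]) :=
    { carrier := {c | ∀ᶠ x in nhds x₀, ∑ i, c i * g x i = 0}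
      zero_mem' := by simp
      add_mem' := fun {c d} hc hd => by
        filter_upwards [hc, hd] with x h1 h2
        simp only [Pi.add_apply, add_mul, Finset.sum_add_distrib, h1, h2, add_zero]
      smul_mem' := fun t c hc => by
        filter_upwards [hc] with x h1
        simp only [Pi.smul_apply, smul_eq_mul, mul_assoc, ← Finset.mul_sum, h1, mul_zero] }
  -- the relations in `Z` hold on a common neighbourhood
  obtain ⟨ρ₁, hρ₁, hZ⟩ : ∃ ρ₁ > 0, ∀ x ∈ Metric.ball x₀ ρ₁, ∀ c ∈ Z, ∑ i, c i * g x i = 0 := by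
    obtain ⟨S, hS⟩ := IsNoetherian.noetherian Z
    have h : ∀ᶠ x in nhds x₀, ∀ c ∈ S, ∑ i, c i * g x i = 0 :=
      (Filter.eventually_all_finset S).2 fun c hc => by
        have : c ∈ Z := hS ▸ Submodule.subset_span hc
        exact this
    obtain ⟨ρ₁, hρ₁, h⟩ := Metric.eventually_nhds_iff_ball.1 h
    refine ⟨ρ₁, hρ₁, fun x hx c hc => ?_⟩
    rw [← hS] at hc
    induction hc using Submodule.span_induction with
    | mem c hc => exact h x hx c hc
    | zero => simp
    | add c d _ _ h1 h2 =>
      simp only [Pi.add_apply, add_mul, Finset.sum_add_distrib, h1, h2, add_zero]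
    | smul t c _ h1 =>
      simp only [Pi.smul_apply, smul_eq_mul, mul_assoc, ← Finset.mul_sum, h1, mul_zero]
  obtain ⟨Z', hZ'⟩ := Submodule.exists_isCompl Z
  have hcomp : IsCompact ((Z' : Set (Fin n → ℚ_[p])) ∩ Metric.sphere 0 1) :=
    (isCompact_sphere 0 1).inter_left Z'.closed_of_finiteDimensional
  obtain ⟨C, α, ρ₂, hC, hα, hρ₂, hgood⟩ : ∃ C α ρ : ℝ, 1 ≤ C ∧ 0 < α ∧ 0 < ρ ∧
      ∀ c ∈ (Z' : Set (Fin n → ℚ_[p])) ∩ Metric.sphere 0 1,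
        IsGood μ C α (fun x => ‖∑ i, c i * g x i‖) (Metric.ball x₀ ρ) := by
    refine hcomp.induction_on (p := fun S => ∃ C α ρ : ℝ, 1 ≤ C ∧ 0 < α ∧ 0 < ρ ∧
      ∀ c ∈ S, IsGood μ C α (fun x => ‖∑ i, c i * g x i‖) (Metric.ball x₀ ρ)) ?_ ?_ ?_ ?_
    · exact ⟨1, 1, 1, le_rfl, one_pos, one_pos, by simp⟩
    · rintro S S' hSS ⟨C, α, ρ, hC, hα, hρ, h⟩
      exact ⟨C, α, ρ, hC, hα, hρ, fun c hc => h c (hSS hc)⟩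
    · rintro S S' ⟨C, α, ρ, hC, hα, hρ, h⟩ ⟨C', α', ρ', hC', hα', hρ', h'⟩
      have hC'' := hC.trans (le_max_left C C')
      have hα'' := lt_min hα hα'
      refine ⟨max C C', min α α', min ρ ρ', hC'', hα'', lt_min hρ hρ', ?_⟩
      rintro c (hc | hc)
      · exact (h c hc).mono (le_max_left _ _) hC'' hα''.le (min_le_left _ _)
          (Metric.ball_subset_ball (min_le_left _ _))
      · exact (h' c hc).mono (le_max_right _ _) hC'' hα''.le (min_le_right _ _)
          (Metric.ball_subset_ball (min_le_right _ _))
    · rintro c ⟨hcZ', hc1⟩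
      have hcZ : c ∉ Z := fun hcZ => by
        have h0 : c = 0 := Submodule.disjoint_def.1 hZ'.disjoint c hcZ hcZ'
        simp [h0] at hc1
      obtain ⟨C, α, ρ, hC, hα, hρ, h⟩ := exists_local_good μ hg hcZ
      refine ⟨_, mem_nhdsWithin_of_mem_nhds h, max C 1, α, ρ, le_max_right _ _, hα, hρ, ?_⟩
      intro d hd
      exact IsGood.mono hd (le_max_left _ _) (le_max_right _ _) hα.le le_rfl subset_rfl
  refine ⟨C, α, min ρ₁ ρ₂, hC, hα, lt_min hρ₁ hρ₂, fun c => ?_⟩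
  obtain ⟨z, hz, c', hc', rfl⟩ : ∃ z ∈ Z, ∃ c' ∈ Z', z + c' = c :=
    Submodule.mem_sup.1 (hZ'.sup_eq_top ▸ Submodule.mem_top)
  have hzc : ∀ x ∈ Metric.ball x₀ (min ρ₁ ρ₂),
      ∑ i, (z + c') i * g x i = ∑ i, c' i * g x i := fun x hx => by
    simp only [Pi.add_apply, add_mul, Finset.sum_add_distrib,
      hZ x (Metric.ball_subset_ball (min_le_left _ _) hx) z hz, zero_add]
  rcases eq_or_ne c' 0 with rfl | hc0
  · refine isGood_zero.congr fun x hx => ?_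
    simp only [hzc x hx, Pi.zero_apply, zero_mul, Finset.sum_const_zero, norm_zero]
  -- the sup norm of `c'` is the norm of one of its coordinates
  obtain ⟨t, ht⟩ : ∃ t : ℚ_[p], ‖t‖ = ‖c'‖ := by
    have : Nonempty (Fin n) := by
      by_contra hn
      rw [not_nonempty_iff] at hn
      exact hc0 (Subsingleton.elim _ _)
    obtain ⟨i, hi⟩ := exists_norm_apply_eq c'
    exact ⟨_, hi⟩
  have htpos : 0 < ‖t‖ := ht ▸ norm_pos_iff.2 hc0
  have hunit : t⁻¹ • c' ∈ (Z' : Set (Fin n → ℚ_[p])) ∩ Metric.sphere 0 1 := by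
    refine ⟨Z'.smul_mem _ hc', ?_⟩
    rw [mem_sphere_zero_iff_norm, norm_smul, norm_inv, ← ht, inv_mul_cancel₀ htpos.ne']
  refine (((hgood _ hunit).const_mul htpos).mono le_rfl hC hα.le le_rfl
    (Metric.ball_subset_ball (min_le_right ρ₁ ρ₂))).congr fun x hx => ?_
  simp only [hzc x hx, Pi.smul_apply, smul_eq_mul, mul_assoc, ← Finset.mul_sum, norm_mul, norm_inv]
  rw [mul_inv_cancel_left₀ htpos.ne']

end Compactness

/-! ### Vector-valued functions -/

section Vector
variable {p : ℕ} [Fact p.Prime]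

/-- The sup norm of a continuous vector-valued function is good if all components are: on a given
ball it takes its maximum at some point `y`, where it equals the norm of some component `j`; the set
where `‖h‖` is small is then contained in the corresponding set for `h j`. -/
lemma isGood_pi {m : ℕ} [MeasurableSpace (Fin m → ℚ_[p])]
    (μ : Measure (Fin m → ℚ_[p])) {d : ℕ} {C α : ℝ} {h : (Fin m → ℚ_[p]) → Fin d → ℚ_[p]}
    {V : Set (Fin m → ℚ_[p])} (hc : ContinuousOn h V)
    (hg : ∀ j, IsGood μ C α (fun x => ‖h x j‖) V) :
    IsGood μ C α (fun x => ‖h x‖) V := by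
  rcases isEmpty_or_nonempty (Fin d) with hd | hd
  · exact isGood_zero.congr fun x _ => by simp [Subsingleton.elim (h x) 0]
  intro z r hr hB ε hε
  obtain ⟨s, -, hsr, hs⟩ := ball_eq_closedBall (p := p) (m := m) hr
  have hcB : ContinuousOn h (Metric.closedBall z ‖s‖) := hc.mono ((hs z).symm.le.trans hB)
  obtain ⟨y, hy, hymax⟩ := (isCompact_closedBall z ‖s‖).exists_isMaxOn
    ⟨z, Metric.mem_closedBall_self (norm_nonneg _)⟩ hcB.norm
  obtain ⟨j, hj⟩ := exists_norm_apply_eq (h y)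
  rw [← hs z] at hy hymax
  have hle : ∀ x ∈ Metric.ball z r, ‖h x j‖ ≤ ‖h y‖ := fun x hx =>
    (norm_le_pi_norm _ j).trans (hymax hx)
  have hsup : ⨆ x ∈ Metric.ball z r, ‖h x‖ ≤ ‖h y‖ :=
    Real.iSup_le (fun x => Real.iSup_le (fun hx => hymax hx) (norm_nonneg _)) (norm_nonneg _)
  have hsupj : ‖h y‖ ≤ ⨆ x ∈ Metric.ball z r, ‖h x j‖ := by
    have hb : BddAbove (Set.range fun x => ⨆ _ : x ∈ Metric.ball z r, ‖h x j‖) := by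
      refine ⟨‖h y‖, ?_⟩
      rintro _ ⟨x, rfl⟩
      exact Real.iSup_le (hle x) (norm_nonneg _)
    refine le_trans ?_ (le_ciSup hb y)
    simp only [hy, ciSup_const, hj, le_refl]
  refine (measure_mono ?_).trans (hg j z r hr hB ε hε)
  rintro x ⟨hx, hx'⟩
  refine ⟨hx, (norm_le_pi_norm _ j).trans_lt (hx'.trans_le ?_)⟩
  exact mul_le_mul_of_nonneg_left (hsup.trans hsupj) hε.le

end Vector

/-- **Corollary 4.6 (ii).**  Let `f₁, …, f_n` be analytic functions from a neighbourhood
`U` of `x₀ ∈ ℚ_p^m` to `ℚ_p` such that `1, f₁, …, f_n` are linearly independent on every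
neighbourhood of `x₀`.  Then there are a neighbourhood `V' ⊆ U` of `x₀` and
`C', α' > 0` such that for all `c₁, …, c_n ∈ ℚ_p` the map `x ↦ ‖∑ cᵢ ∇fᵢ(x)‖` is
`(C', α')`-good on `V'`. -/
theorem gradient_combinations_good
    (p : ℕ) [Fact p.Prime] (m n : ℕ)
    [MeasurableSpace (Fin m → ℚ_[p])] [BorelSpace (Fin m → ℚ_[p])]
    (μ : Measure (Fin m → ℚ_[p])) [μ.IsAddHaarMeasure]
    (hμ : μ {x : Fin m → ℚ_[p] | ∀ i, ‖x i‖ ≤ 1} = 1)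
    (U : Set (Fin m → ℚ_[p])) (hU : IsOpen U)
    (x₀ : Fin m → ℚ_[p]) (hx₀ : x₀ ∈ U)
    (f : Fin n → (Fin m → ℚ_[p]) → ℚ_[p])
    (hfa : ∀ i, AnalyticOnNhd ℚ_[p] (f i) U)
    (hnd : ∀ W ∈ nhds x₀, ∀ (c₀ : ℚ_[p]) (c : Fin n → ℚ_[p]),
      (∀ x ∈ W, c₀ + ∑ i, c i * f i x = 0) → c₀ = 0 ∧ ∀ i, c i = 0) :
    ∃ (V' : Set (Fin m → ℚ_[p])) (C' α' : ℝ),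
      V' ⊆ U ∧ IsOpen V' ∧ x₀ ∈ V' ∧ 0 < C' ∧ 0 < α' ∧
      ∀ c : Fin n → ℚ_[p],
        IsGood μ C' α'
          (fun x => ‖(fun j => ∑ i, c i * pd (f i) j x : Fin m → ℚ_[p])‖) V' := by
  have hpd : ∀ i j, ∀ x ∈ U, AnalyticAt ℚ_[p] (pd (f i) j) x := fun i j x hx =>
    ((ContinuousLinearMap.apply ℚ_[p] ℚ_[p]
      (Pi.single j 1 : Fin m → ℚ_[p])).analyticAt _).comp ((hfa i).fderiv x hx)
  have hgan : ∀ j : Fin m, AnalyticAt ℚ_[p] (fun x i => pd (f i) j x) x₀ := fun j =>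
    AnalyticAt.pi fun i => hpd i j x₀ hx₀
  -- `C j`, `α j`, `ρ j` work for all combinations of the `j`-th partial derivatives
  choose C α ρ hC hα hρ hgood using fun j => exists_good_family μ (hgan j)
  obtain ⟨ρ₀, hρ₀, hρU⟩ := Metric.isOpen_iff.1 hU x₀ hx₀
  obtain ⟨C', hCC', hC'⟩ : ∃ C', (∀ j, C j ≤ C') ∧ 1 ≤ C' := by
    obtain ⟨B, hB⟩ := (Set.finite_range C).bddAbove
    exact ⟨max B 1, fun j => (hB ⟨j, rfl⟩).trans (le_max_left _ _), le_max_right _ _⟩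
  have hsmall : ∀ β : Fin m → ℝ, (∀ j, 0 < β j) → ∃ b, (∀ j, b < β j) ∧ 0 < b := fun β hβ => by
    have h : ∀ᶠ b in nhdsWithin (0 : ℝ) (Set.Ioi 0), ∀ j, b < β j :=
      (Filter.eventually_all.2 fun j => Iio_mem_nhds (hβ j)).filter_mono nhdsWithin_le_nhds
    exact (h.and eventually_mem_nhdsWithin).exists
  obtain ⟨α', hαα', hα'⟩ := hsmall α hα
  obtain ⟨ρ', hρρ', hρ'⟩ := hsmall ρ hρ
  refine ⟨Metric.ball x₀ (min ρ₀ ρ'), C', α', (Metric.ball_subset_ball (min_le_left _ _)).trans hρU,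
    Metric.isOpen_ball, Metric.mem_ball_self (lt_min hρ₀ hρ'), one_pos.trans_le hC', hα',
    fun c => isGood_pi μ ?_ fun j => ?_⟩
  · refine continuousOn_pi.2 fun j => continuousOn_finsetSum _ fun i _ => ?_
    refine continuousOn_const.mul fun x hx => ?_
    have hxU : x ∈ U := hρU (Metric.ball_subset_ball (min_le_left _ _) hx)
    exact (hpd i j x hxU).continuousAt.continuousWithinAt
  · exact (hgood j c).mono (hCC' j) hC' hα'.le (hαα' j).le
      (Metric.ball_subset_ball ((min_le_right _ _).trans (hρρ' j).le))
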